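/- Theorem 1 (for the convolution-stride slicer): For every p ≥ 1, the convolution-stride sliced Wasserstein CSW-s_p is a pseudo-metric on the space of Borel probability measures on ℝ^{c×d×d} with finite p-th moments: for all such measures μ, ν, μ₁, μ₂, μ₃ one has CSW-s_p(μ,ν) ≥ 0, CSW-s_p(μ,μ) = 0, CSW-s_p(μ,ν) = CSW-s_p(ν,μ), and CSW-s_p(μ₁,μ₃) ≤ CSW-s_p(μ₁,μ₂) + CSW-s_p(μ₂,μ₃). -/

import Mathlib

open MeasureTheory ENNReal

noncomputable section

/-- The set of couplings (transport plans) between two measures. -/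
def couplings {E : Type*} [MeasurableSpace E] (μ ν : Measure E) : Set (Measure (E × E)) :=
  {π | π.map Prod.fst = μ ∧ π.map Prod.snd = ν}

/-- The Wasserstein distance of order `p`:
`W_p(μ,ν) = (inf over couplings π of ∫ dist(x,y)^p dπ)^(1/p)`. -/
noncomputable def wassersteinDist {E : Type*} [MeasurableSpace E] [PseudoMetricSpace E]
    (p : ℝ) (μ ν : Measure E) : ℝ :=
  (⨅ π ∈ couplings μ ν, ∫⁻ q : E × E, ENNReal.ofReal (dist q.1 q.2 ^ p) ∂π).toReal ^ (1 / p)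

/-- A measure has a finite `p`-th moment. -/
def FiniteMomentP {E : Type*} [MeasurableSpace E] [NormedAddCommGroup E] (p : ℝ)
    (μ : Measure E) : Prop :=
  ∫⁻ x, ENNReal.ofReal (‖x‖ ^ p) ∂μ < ⊤

/-- Stride-2 convolution of a `c' × (2m) × (2m)` tensor with a `c' × 2 × 2` kernel (one output
channel): `Y i j = ∑ h, ∑ i', ∑ j', X h (2i+i') (2j+j') * K h i' j'`. -/
def convStride2 {c' : ℕ} (m : ℕ) (X : Fin c' → Fin (2 * m) → Fin (2 * m) → ℝ)
    (K : Fin c' → Fin 2 → Fin 2 → ℝ) (i j : Fin m) : ℝ :=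
  ∑ h : Fin c', ∑ i' : Fin 2, ∑ j' : Fin 2,
    X h ⟨2 * i.1 + i'.1, by have h1 := i.isLt; have h2 := i'.isLt; omega⟩
        ⟨2 * j.1 + j'.1, by have h1 := j.isLt; have h2 := j'.isLt; omega⟩ * K h i' j'

/-- Iterated stride-2 convolutions with single-channel `1 × 2 × 2` kernels, going from
spatial size `2^k * a` down to size `a`; `Ks 0` is applied first. -/
def midConv (a : ℕ) : (k : ℕ) → (Fin k → Fin 1 → Fin 2 → Fin 2 → ℝ) →
    (Fin (2 ^ k * a) → Fin (2 ^ k * a) → ℝ) → Fin a → Fin a → ℝ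
  | 0, _, X, i, j => X (Fin.cast (by ring) i) (Fin.cast (by ring) j)
  | k + 1, Ks, X, i, j =>
      midConv a k (fun t => Ks t.succ)
        (convStride2 (2 ^ k * a)
          (fun _ r s => X (Fin.cast (by ring) r) (Fin.cast (by ring) s))
          (Ks 0)) i j

/-- The space of `c × d × d` images, with the Euclidean (ℓ2) norm. -/
abbrev TensorSpace (c d : ℕ) := EuclideanSpace ℝ (Fin c × Fin d × Fin d)

/-- The convolution-stride slicer `CS-s(·|K^(1),…,K^(N))` with `N = M + 2` kernels, on images of
size `c × d × d` where `d = 2^(M+1) * a`: a stride-2 convolution with the `c × 2 × 2` kernel `K1`,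
then `M` stride-2 convolutions with the `1 × 2 × 2` kernels `Ks`, then the inner product with the
`1 × a × a` kernel `KN`. -/
def CSs (c a M : ℕ) (K1 : Fin c → Fin 2 → Fin 2 → ℝ)
    (Ks : Fin M → Fin 1 → Fin 2 → Fin 2 → ℝ) (KN : Fin 1 → Fin a → Fin a → ℝ)
    (X : TensorSpace c (2 ^ (M + 1) * a)) : ℝ :=
  ∑ i : Fin a, ∑ j : Fin a,
    midConv a M Ks
      (convStride2 (2 ^ M * a)
        (fun h r s => X (h, Fin.cast (by ring) r, Fin.cast (by ring) s)) K1) i j * KN 0 i j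

/-- The uniform probability distribution on the unit sphere of `EuclideanSpace ℝ ι`. -/
noncomputable def sphereUniform (ι : Type*) [Fintype ι] :
    Measure (Metric.sphere (0 : EuclideanSpace ℝ ι) 1) :=
  ((volume : Measure (EuclideanSpace ℝ ι)).toSphere Set.univ)⁻¹ •
    (volume : Measure (EuclideanSpace ℝ ι)).toSphere

/-- Sample space for the random kernels of the convolution-stride slicer: one kernel in the unit
sphere of `ℝ^{c×2×2}`, `M` kernels in the unit sphere of `ℝ^{1×2×2}`, and one kernel in the unit
sphere of `ℝ^{1×a×a}`. -/
abbrev KernelOmega (c a M : ℕ) :=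
  Metric.sphere (0 : EuclideanSpace ℝ (Fin c × Fin 2 × Fin 2)) 1 ×
    (Fin M → Metric.sphere (0 : EuclideanSpace ℝ (Fin 1 × Fin 2 × Fin 2)) 1) ×
    Metric.sphere (0 : EuclideanSpace ℝ (Fin 1 × Fin a × Fin a)) 1

/-- The joint law of the random kernels: independent, each uniformly distributed on the unit
sphere of its kernel space. -/
noncomputable def kernelMeasure (c a M : ℕ) : Measure (KernelOmega c a M) :=
  (sphereUniform (Fin c × Fin 2 × Fin 2)).prod
    ((Measure.pi fun _ : Fin M => sphereUniform (Fin 1 × Fin 2 × Fin 2)).prod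
      (sphereUniform (Fin 1 × Fin a × Fin a)))

/-- View a point of `EuclideanSpace ℝ (α × β × γ)` as a curried kernel. -/
def curry3 {α β γ : Type*} (x : EuclideanSpace ℝ (α × β × γ)) : α → β → γ → ℝ :=
  fun h i j => x (h, i, j)

/-- The convolution-stride slicer associated with a sample of the random kernels. -/
noncomputable def slicerOf (c a M : ℕ) (ω : KernelOmega c a M) :
    TensorSpace c (2 ^ (M + 1) * a) → ℝ :=
  CSs c a M (curry3 (ω.1 : EuclideanSpace ℝ (Fin c × Fin 2 × Fin 2)))
    (fun t => curry3 (ω.2.1 t : EuclideanSpace ℝ (Fin 1 × Fin 2 × Fin 2)))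
    (curry3 (ω.2.2 : EuclideanSpace ℝ (Fin 1 × Fin a × Fin a)))

/-- The convolution-stride sliced Wasserstein distance of order `p`:
`CSW-s_p(μ,ν) = (E[W_p^p(CS-s(·|K)♯μ, CS-s(·|K)♯ν)])^(1/p)`, the expectation being over the
random kernels. -/
noncomputable def CSWs (c a M : ℕ) (p : ℝ)
    (μ ν : Measure (TensorSpace c (2 ^ (M + 1) * a))) : ℝ :=
  (∫ ω, wassersteinDist p (μ.map (slicerOf c a M ω)) (ν.map (slicerOf c a M ω)) ^ p
    ∂(kernelMeasure c a M)) ^ (1 / p)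

theorem couplings_swap {E : Type*} [MeasurableSpace E] {μ ν : Measure E}
    {π : Measure (E × E)} (h : π ∈ couplings μ ν) :
    π.map Prod.swap ∈ couplings ν μ := by
  refine ⟨?_, ?_⟩
  · rw [Measure.map_map measurable_fst measurable_swap]
    exact h.2
  · rw [Measure.map_map measurable_snd measurable_swap]
    exact h.1

/-- The gluing lemma. -/
theorem exists_gluing {F : Type*} [MeasurableSpace F] [StandardBorelSpace F] [Nonempty F]
    {ν : Measure F} (π π' : Measure (F × F)) [IsFiniteMeasure π] [IsFiniteMeasure π']
    (h : π.map Prod.snd = ν) (h' : π'.map Prod.fst = ν) :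
    ∃ γ : Measure ((F × F) × F), γ.map Prod.fst = π ∧ γ.map (fun q => (q.1.2, q.2)) = π' := by
  refine ⟨π.compProd (π'.condKernel.comap Prod.snd measurable_snd),
    Measure.fst_compProd _ _, ?_⟩
  ext s hs
  have hm : Measurable fun q : (F × F) × F => (q.1.2, q.2) := by fun_prop
  rw [Measure.map_apply hm hs, Measure.compProd_apply (hm hs)]
  conv_rhs => rw [← π'.disintegrate π'.condKernel, Measure.compProd_apply hs, Measure.fst, h', ← h,
    lintegral_map (ProbabilityTheory.Kernel.measurable_kernel_prodMk_left hs) measurable_snd]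
  rfl

/-- The Wasserstein distance of order `p` with values in `ℝ≥0∞`, written with `Lᵖ` seminorms. -/
def wassersteinE {E : Type*} [MeasurableSpace E] [PseudoMetricSpace E]
    (p : ℝ) (μ ν : Measure E) : ℝ≥0∞ :=
  ⨅ π ∈ couplings μ ν, eLpNorm (fun q : E × E => dist q.1 q.2) (ENNReal.ofReal p) π

section Wasserstein

variable {E : Type*} [MeasurableSpace E] [PseudoMetricSpace E] {p : ℝ}

theorem wassersteinDist_eq_toReal (hp : 1 ≤ p) (μ ν : Measure E) :
    wassersteinDist p μ ν = (wassersteinE p μ ν).toReal := by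
  have hp0 : 0 < p := by linarith
  have hq : 0 < 1 / p := by positivity
  rw [wassersteinDist, wassersteinE, ENNReal.toReal_rpow]
  congr 1
  change ENNReal.orderIsoRpow (1 / p) hq _ = _
  simp only [OrderIso.map_iInf, ENNReal.orderIsoRpow_apply]
  refine iInf_congr fun π => iInf_congr fun _ => ?_
  rw [eLpNorm_eq_lintegral_rpow_enorm_toReal (by simpa using hp0) ENNReal.ofReal_ne_top,
    ENNReal.toReal_ofReal hp0.le]
  congr 1
  refine lintegral_congr fun q => ?_
  rw [Real.enorm_of_nonneg dist_nonneg, ENNReal.ofReal_rpow_of_nonneg dist_nonneg hp0.le]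

theorem wassersteinE_comm_le (μ ν : Measure E) :
    wassersteinE p μ ν ≤ wassersteinE p ν μ := by
  refine le_iInf₂ fun π hπ => ?_
  refine (iInf₂_le _ (couplings_swap hπ)).trans (le_of_eq ?_)
  have hswap : MeasurableEmbedding (Prod.swap : E × E → E × E) :=
    MeasurableEquiv.prodComm.measurableEmbedding
  rw [hswap.eLpNorm_map_measure]
  refine eLpNorm_congr_norm_ae (Filter.Eventually.of_forall fun q => ?_)
  simp [dist_comm]

theorem wassersteinE_comm (μ ν : Measure E) : wassersteinE p μ ν = wassersteinE p ν μ :=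
  le_antisymm (wassersteinE_comm_le μ ν) (wassersteinE_comm_le ν μ)

theorem wassersteinDist_comm (hp : 1 ≤ p) (μ ν : Measure E) :
    wassersteinDist p μ ν = wassersteinDist p ν μ := by
  rw [wassersteinDist_eq_toReal hp, wassersteinDist_eq_toReal hp, wassersteinE_comm]

theorem wassersteinDist_nonneg (p : ℝ) (μ ν : Measure E) : 0 ≤ wassersteinDist p μ ν :=
  Real.rpow_nonneg ENNReal.toReal_nonneg _

variable [SecondCountableTopology E] [OpensMeasurableSpace E]

/-- Two random variables on a common space provide a coupling of their laws. -/
theorem wassersteinE_map_le {X : Type*} [MeasurableSpace X] (ρ : Measure X) {f g : X → E}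
    (hf : Measurable f) (hg : Measurable g) :
    wassersteinE p (ρ.map f) (ρ.map g) ≤
      eLpNorm (fun x => dist (f x) (g x)) (ENNReal.ofReal p) ρ := by
  have hfg : Measurable fun x => (f x, g x) := hf.prodMk hg
  have hmem : ρ.map (fun x => (f x, g x)) ∈ couplings (ρ.map f) (ρ.map g) :=
    ⟨by rw [Measure.map_map measurable_fst hfg]; rfl,
      by rw [Measure.map_map measurable_snd hfg]; rfl⟩
  refine (iInf₂_le _ hmem).trans (le_of_eq ?_)
  rw [eLpNorm_map_measure measurable_dist.aestronglyMeasurable hfg.aemeasurable]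
  rfl

theorem wassersteinE_self (μ : Measure E) : wassersteinE p μ μ = 0 := by
  have h := wassersteinE_map_le (p := p) μ (measurable_id (α := E)) measurable_id
  simpa using h

theorem wassersteinE_triangle [StandardBorelSpace E] (hp : 1 ≤ p)
    (μ₁ μ₂ μ₃ : Measure E) [IsFiniteMeasure μ₁] [IsFiniteMeasure μ₂] :
    wassersteinE p μ₁ μ₃ ≤ wassersteinE p μ₁ μ₂ + wassersteinE p μ₂ μ₃ := by
  rcases isEmpty_or_nonempty E with hE | hE
  · rw [Subsingleton.elim μ₁ μ₃, wassersteinE_self]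
    exact zero_le
  have key : ∀ π ∈ couplings μ₁ μ₂, ∀ π' ∈ couplings μ₂ μ₃, wassersteinE p μ₁ μ₃ ≤
      eLpNorm (fun q : E × E => dist q.1 q.2) (ENNReal.ofReal p) π +
        eLpNorm (fun q : E × E => dist q.1 q.2) (ENNReal.ofReal p) π' := by
    intro π hπ π' hπ'
    have : IsFiniteMeasure (π.map Prod.fst) := by rw [hπ.1]; infer_instance
    have : IsFiniteMeasure (π'.map Prod.fst) := by rw [hπ'.1]; infer_instance
    have : IsFiniteMeasure π := Measure.isFiniteMeasure_of_map measurable_fst.aemeasurable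
    have : IsFiniteMeasure π' := Measure.isFiniteMeasure_of_map measurable_fst.aemeasurable
    obtain ⟨γ, h₁, h₂⟩ := exists_gluing π π' hπ.2 hπ'.1
    have hm : Measurable fun q : (E × E) × E => (q.1.2, q.2) := by fun_prop
    have e₁ : γ.map (fun q => q.1.1) = μ₁ := by
      rw [← hπ.1, ← h₁, Measure.map_map measurable_fst measurable_fst]; rfl
    have e₃ : γ.map (fun q => q.2) = μ₃ := by
      rw [← hπ'.2, ← h₂, Measure.map_map measurable_snd hm]; rfl
    have hle := wassersteinE_map_le (p := p) γ (f := fun q => q.1.1) (g := fun q => q.2)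
      (by fun_prop) (by fun_prop)
    rw [e₁, e₃] at hle
    have d₁ : Measurable fun q : (E × E) × E => dist q.1.1 q.1.2 := by fun_prop
    have d₂ : Measurable fun q : (E × E) × E => dist q.1.2 q.2 := by fun_prop
    rw [← h₁, ← h₂,
      eLpNorm_map_measure measurable_dist.aestronglyMeasurable measurable_fst.aemeasurable,
      eLpNorm_map_measure measurable_dist.aestronglyMeasurable hm.aemeasurable]
    refine hle.trans (le_trans ?_ (eLpNorm_add_le d₁.aestronglyMeasurable
      d₂.aestronglyMeasurable (by simpa using hp)))
    refine eLpNorm_mono_real fun q => ?_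
    rw [Real.norm_of_nonneg dist_nonneg]
    exact dist_triangle _ _ _
  conv_rhs => simp only [wassersteinE, ENNReal.iInf_add, ENNReal.add_iInf]
  exact le_iInf₂ fun π' hπ' => le_iInf₂ fun π hπ => key π hπ π' hπ'

end Wasserstein

section Sliced

variable {V : Type*} [NormedAddCommGroup V] [MeasurableSpace V] [BorelSpace V]
  [SecondCountableTopology V] {p : ℝ}

theorem FiniteMomentP.memLp_id (hp : 1 ≤ p) {μ : Measure V} (h : FiniteMomentP p μ) :
    MemLp (fun x : V => x) (ENNReal.ofReal p) μ := by
  have hp0 : 0 < p := by linarith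
  refine ⟨measurable_id.aestronglyMeasurable, ?_⟩
  rw [eLpNorm_lt_top_iff_lintegral_rpow_enorm_lt_top (by simpa using hp0) ENNReal.ofReal_ne_top,
    ENNReal.toReal_ofReal hp0.le]
  simpa only [FiniteMomentP, ← ofReal_norm, ENNReal.ofReal_rpow_of_nonneg (norm_nonneg _) hp0.le] using h

variable [NormedSpace ℝ V]

theorem wassersteinE_map_clm_ne_top (hp : 1 ≤ p) {μ ν : Measure V}
    [IsProbabilityMeasure μ] [IsProbabilityMeasure ν] (hμ : FiniteMomentP p μ)
    (hν : FiniteMomentP p ν) (L L' : V →L[ℝ] ℝ) :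
    wassersteinE p (μ.map L) (ν.map L') ≠ ⊤ := by
  have h₁ : MemLp (fun q : V × V => L q.1) (ENNReal.ofReal p) (μ.prod ν) :=
    (L.comp_memLp' (hμ.memLp_id hp)).comp_measurePreserving measurePreserving_fst
  have h₂ : MemLp (fun q : V × V => L' q.2) (ENNReal.ofReal p) (μ.prod ν) :=
    (L'.comp_memLp' (hν.memLp_id hp)).comp_measurePreserving measurePreserving_snd
  have hle := wassersteinE_map_le (p := p) (μ.prod ν) (f := fun q => L q.1) (g := fun q => L' q.2)
    (by fun_prop) (by fun_prop)
  have e₁ : (μ.prod ν).map (fun q => L q.1) = μ.map L := by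
    rw [← (measurePreserving_fst (μ := μ) (ν := ν)).map_eq,
      Measure.map_map L.measurable measurable_fst]
    simp [Function.comp_def]
  have e₂ : (μ.prod ν).map (fun q => L' q.2) = ν.map L' := by
    rw [← (measurePreserving_snd (μ := μ) (ν := ν)).map_eq,
      Measure.map_map L'.measurable measurable_snd]
    simp [Function.comp_def]
  rw [e₁, e₂] at hle
  refine (hle.trans_lt ?_).ne
  simpa [Real.dist_eq] using (h₁.sub h₂).norm.2

theorem wassersteinDist_map_clm_triangle (hp : 1 ≤ p) {μ₁ μ₂ μ₃ : Measure V}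
    [IsProbabilityMeasure μ₁] [IsProbabilityMeasure μ₂] [IsProbabilityMeasure μ₃]
    (h₁ : FiniteMomentP p μ₁) (h₂ : FiniteMomentP p μ₂) (h₃ : FiniteMomentP p μ₃)
    (L₁ L₂ L₃ : V →L[ℝ] ℝ) :
    wassersteinDist p (μ₁.map L₁) (μ₃.map L₃) ≤
      wassersteinDist p (μ₁.map L₁) (μ₂.map L₂) + wassersteinDist p (μ₂.map L₂) (μ₃.map L₃) := by
  have f₁ := wassersteinE_map_clm_ne_top hp h₁ h₂ L₁ L₂
  have f₂ := wassersteinE_map_clm_ne_top hp h₂ h₃ L₂ L₃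
  simp only [wassersteinDist_eq_toReal hp]
  rw [← ENNReal.toReal_add f₁ f₂]
  exact ENNReal.toReal_mono (ENNReal.add_ne_top.2 ⟨f₁, f₂⟩) (wassersteinE_triangle hp _ _ _)

theorem wassersteinDist_map_clm_le (hp : 1 ≤ p) {μ : Measure V} (hμ : FiniteMomentP p μ)
    (L L' : V →L[ℝ] ℝ) :
    wassersteinDist p (μ.map L) (μ.map L') ≤
      ‖L - L'‖ * (eLpNorm (fun x : V => x) (ENNReal.ofReal p) μ).toReal := by
  rw [wassersteinDist_eq_toReal hp]
  refine ENNReal.toReal_le_of_le_ofReal (by positivity) ?_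
  refine (wassersteinE_map_le μ L.measurable L'.measurable).trans ?_
  rw [ENNReal.ofReal_mul (norm_nonneg _), ENNReal.ofReal_toReal (hμ.memLp_id hp).2.ne]
  refine eLpNorm_le_mul_eLpNorm_of_ae_le_mul (Filter.Eventually.of_forall fun x => ?_) _
  rw [Real.norm_of_nonneg dist_nonneg, Real.dist_eq]
  exact (L - L').le_opNorm x

theorem continuous_wassersteinDist_map_clm (hp : 1 ≤ p) {μ ν : Measure V}
    [IsProbabilityMeasure μ] [IsProbabilityMeasure ν] (hμ : FiniteMomentP p μ)
    (hν : FiniteMomentP p ν) :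
    Continuous fun L : V →L[ℝ] ℝ => wassersteinDist p (μ.map L) (ν.map L) := by
  set K := (eLpNorm (fun x : V => x) (ENNReal.ofReal p) μ).toReal +
    (eLpNorm (fun x : V => x) (ENNReal.ofReal p) ν).toReal with hK
  have hle : ∀ L L' : V →L[ℝ] ℝ, wassersteinDist p (μ.map L) (ν.map L) ≤
      wassersteinDist p (μ.map L') (ν.map L') + K * dist L L' := by
    intro L L'
    have t₁ := wassersteinDist_map_clm_triangle hp hμ hμ hν L L' L
    have t₂ := wassersteinDist_map_clm_triangle hp hμ hν hν L' L' L
    have b₁ := wassersteinDist_map_clm_le hp hμ L L'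
    have b₂ := wassersteinDist_map_clm_le hp hν L' L
    rw [norm_sub_rev] at b₂
    rw [dist_eq_norm, hK]
    linarith
  exact (LipschitzWith.of_le_add_mul' K hle).continuous

end Sliced

section Slicer

theorem convStride2_add {c' : ℕ} (m : ℕ) (X Y : Fin c' → Fin (2 * m) → Fin (2 * m) → ℝ)
    (K : Fin c' → Fin 2 → Fin 2 → ℝ) :
    convStride2 m (X + Y) K = convStride2 m X K + convStride2 m Y K := by
  ext i j
  simp only [convStride2, Pi.add_apply, add_mul, Finset.sum_add_distrib]

theorem convStride2_smul {c' : ℕ} (m : ℕ) (t : ℝ) (X : Fin c' → Fin (2 * m) → Fin (2 * m) → ℝ)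
    (K : Fin c' → Fin 2 → Fin 2 → ℝ) :
    convStride2 m (t • X) K = t • convStride2 m X K := by
  ext i j
  simp only [convStride2, Pi.smul_apply, smul_eq_mul, mul_assoc, Finset.mul_sum]

theorem midConv_add (a k : ℕ) (Ks : Fin k → Fin 1 → Fin 2 → Fin 2 → ℝ)
    (X Y : Fin (2 ^ k * a) → Fin (2 ^ k * a) → ℝ) :
    midConv a k Ks (X + Y) = midConv a k Ks X + midConv a k Ks Y := by
  induction k with
  | zero => rfl
  | succ k ih =>
    ext i j
    simp only [midConv, Pi.add_apply]
    rw [← Pi.add_apply, ← Pi.add_apply, ← ih, ← convStride2_add]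
    rfl

theorem midConv_smul (a k : ℕ) (Ks : Fin k → Fin 1 → Fin 2 → Fin 2 → ℝ) (t : ℝ)
    (X : Fin (2 ^ k * a) → Fin (2 ^ k * a) → ℝ) :
    midConv a k Ks (t • X) = t • midConv a k Ks X := by
  induction k with
  | zero => rfl
  | succ k ih =>
    ext i j
    simp only [midConv, Pi.smul_apply]
    rw [← Pi.smul_apply, ← Pi.smul_apply, ← ih, ← convStride2_smul]
    rfl

theorem continuous_convStride2 {Ω : Type*} [TopologicalSpace Ω] {c' m : ℕ}
    {X : Ω → Fin c' → Fin (2 * m) → Fin (2 * m) → ℝ} {K : Ω → Fin c' → Fin 2 → Fin 2 → ℝ}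
    (hX : Continuous X) (hK : Continuous K) :
    Continuous fun ω => convStride2 m (X ω) (K ω) := by
  unfold convStride2
  fun_prop

theorem continuous_midConv {Ω : Type*} [TopologicalSpace Ω] {a k : ℕ}
    {Ks : Ω → Fin k → Fin 1 → Fin 2 → Fin 2 → ℝ}
    {X : Ω → Fin (2 ^ k * a) → Fin (2 ^ k * a) → ℝ}
    (hK : Continuous Ks) (hX : Continuous X) :
    Continuous fun ω => midConv a k (Ks ω) (X ω) := by
  induction k with
  | zero => simp only [midConv]; fun_prop
  | succ k ih =>
    have h := ih (Ks := fun ω t => Ks ω t.succ) (by fun_prop)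
      (continuous_convStride2 (m := 2 ^ k * a)
        (X := fun ω (_ : Fin 1) r s => X ω (Fin.cast (by ring) r) (Fin.cast (by ring) s))
        (K := fun ω => Ks ω 0) (by fun_prop) (by fun_prop))
    exact h

theorem CSs_add (c a M : ℕ) (K1 : Fin c → Fin 2 → Fin 2 → ℝ)
    (Ks : Fin M → Fin 1 → Fin 2 → Fin 2 → ℝ) (KN : Fin 1 → Fin a → Fin a → ℝ)
    (X Y : TensorSpace c (2 ^ (M + 1) * a)) :
    CSs c a M K1 Ks KN (X + Y) = CSs c a M K1 Ks KN X + CSs c a M K1 Ks KN Y := by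
  have h := convStride2_add (2 ^ M * a)
    (fun h r s => X (h, Fin.cast (by ring) r, Fin.cast (by ring) s))
    (fun h r s => Y (h, Fin.cast (by ring) r, Fin.cast (by ring) s)) K1
  have h' := midConv_add a M Ks
    (convStride2 (2 ^ M * a)
      (fun h r s => X (h, Fin.cast (by ring) r, Fin.cast (by ring) s)) K1)
    (convStride2 (2 ^ M * a)
      (fun h r s => Y (h, Fin.cast (by ring) r, Fin.cast (by ring) s)) K1)
  simp only [Pi.add_def] at h h'
  simp only [CSs, PiLp.add_apply, h, h', add_mul, Finset.sum_add_distrib]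

theorem CSs_smul (c a M : ℕ) (K1 : Fin c → Fin 2 → Fin 2 → ℝ)
    (Ks : Fin M → Fin 1 → Fin 2 → Fin 2 → ℝ) (KN : Fin 1 → Fin a → Fin a → ℝ)
    (t : ℝ) (X : TensorSpace c (2 ^ (M + 1) * a)) :
    CSs c a M K1 Ks KN (t • X) = t * CSs c a M K1 Ks KN X := by
  have h := convStride2_smul (2 ^ M * a) t
    (fun h r s => X (h, Fin.cast (by ring) r, Fin.cast (by ring) s)) K1
  have h' := midConv_smul a M Ks t (convStride2 (2 ^ M * a)
    (fun h r s => X (h, Fin.cast (by ring) r, Fin.cast (by ring) s)) K1)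
  simp only [Pi.smul_def, smul_eq_mul] at h h'
  simp only [CSs, PiLp.smul_apply, h, h', smul_eq_mul, mul_assoc, Finset.mul_sum]

/-- The convolution-stride slicer as a continuous linear functional. -/
def slicerCLM (c a M : ℕ) (ω : KernelOmega c a M) :
    TensorSpace c (2 ^ (M + 1) * a) →L[ℝ] ℝ :=
  LinearMap.toContinuousLinearMap
    { toFun := slicerOf c a M ω
      map_add' := CSs_add c a M _ _ _
      map_smul' := CSs_smul c a M _ _ _ }

theorem coe_slicerCLM (c a M : ℕ) (ω : KernelOmega c a M) :
    ⇑(slicerCLM c a M ω) = slicerOf c a M ω := rfl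

theorem continuous_slicerCLM (c a M : ℕ) : Continuous (slicerCLM c a M) := by
  refine continuous_clm_apply.2 fun X => ?_
  simp only [coe_slicerCLM, slicerOf, CSs]
  have h₁ : Continuous fun ω : KernelOmega c a M => curry3 ω.1.1 := by
    unfold curry3; fun_prop
  have h₂ : Continuous fun (ω : KernelOmega c a M) (t : Fin M) => curry3 (ω.2.1 t).1 := by
    unfold curry3; fun_prop
  have h₃ : Continuous fun ω : KernelOmega c a M => curry3 ω.2.2.1 := by
    unfold curry3; fun_prop
  have h := continuous_midConv h₂ (continuous_convStride2 (m := 2 ^ M * a)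
    (X := fun _ h r s => X (h, Fin.cast (by ring) r, Fin.cast (by ring) s)) continuous_const h₁)
  fun_prop

instance isFiniteMeasure_sphereUniform (ι : Type*) [Fintype ι] :
    IsFiniteMeasure (sphereUniform ι) := by
  refine ⟨?_⟩
  rw [sphereUniform, Measure.smul_apply, smul_eq_mul]
  exact (ENNReal.inv_mul_le_one _).trans_lt ENNReal.one_lt_top

instance isFiniteMeasure_kernelMeasure (c a M : ℕ) : IsFiniteMeasure (kernelMeasure c a M) := by
  unfold kernelMeasure
  infer_instance

end Slicer

theorem integral_rpow_add_le {Ω : Type*} [MeasurableSpace Ω] {P : Measure Ω} {p : ℝ} (hp : 1 ≤ p)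
    {f g h : Ω → ℝ} (hf₀ : 0 ≤ f) (hg₀ : 0 ≤ g) (hh₀ : 0 ≤ h)
    (hf : MemLp f (ENNReal.ofReal p) P) (hg : MemLp g (ENNReal.ofReal p) P)
    (hh : MemLp h (ENNReal.ofReal p) P) (hle : h ≤ f + g) :
    (∫ ω, h ω ^ p ∂P) ^ (1 / p) ≤ (∫ ω, f ω ^ p ∂P) ^ (1 / p) + (∫ ω, g ω ^ p ∂P) ^ (1 / p) := by
  have hp0 : 0 < p := by linarith
  have key : ∀ u : Ω → ℝ, 0 ≤ u → MemLp u (ENNReal.ofReal p) P →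
      (∫ ω, u ω ^ p ∂P) ^ (1 / p) = (eLpNorm u (ENNReal.ofReal p) P).toReal := by
    intro u hu hm
    rw [hm.eLpNorm_eq_integral_rpow_norm (by simpa using hp0) ENNReal.ofReal_ne_top,
      ENNReal.toReal_ofReal hp0.le, ENNReal.toReal_ofReal (by positivity), one_div]
    simp_rw [Real.norm_of_nonneg (hu _)]
  rw [key f hf₀ hf, key g hg₀ hg, key h hh₀ hh, ← ENNReal.toReal_add hf.2.ne hg.2.ne]
  refine ENNReal.toReal_mono (ENNReal.add_ne_top.2 ⟨hf.2.ne, hg.2.ne⟩) ?_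
  refine le_trans (eLpNorm_mono_real fun ω => ?_) (eLpNorm_add_le hf.1 hg.1 (by simpa using hp))
  rw [Real.norm_of_nonneg (hh₀ ω)]
  exact hle ω

theorem memLp_wassersteinDist_slicerOf (c a M : ℕ) {p : ℝ} (hp : 1 ≤ p)
    {μ ν : Measure (TensorSpace c (2 ^ (M + 1) * a))}
    [IsProbabilityMeasure μ] [IsProbabilityMeasure ν]
    (hμ : FiniteMomentP p μ) (hν : FiniteMomentP p ν) :
    MemLp (fun ω => wassersteinDist p (μ.map (slicerOf c a M ω)) (ν.map (slicerOf c a M ω)))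
      (ENNReal.ofReal p) (kernelMeasure c a M) := by
  have hcont : Continuous fun ω =>
      wassersteinDist p (μ.map (slicerOf c a M ω)) (ν.map (slicerOf c a M ω)) := by
    simp only [← coe_slicerCLM]
    exact (continuous_wassersteinDist_map_clm hp hμ hν).comp (continuous_slicerCLM c a M)
  obtain ⟨C, hC⟩ := isCompact_univ.exists_bound_of_continuousOn hcont.continuousOn
  exact MemLp.of_bound hcont.measurable.aestronglyMeasurable C
    (Filter.Eventually.of_forall fun ω => hC ω (Set.mem_univ ω))

/-- Theorem 1 (for the convolution-stride slicer): for every `p ≥ 1`, the convolution-stride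
sliced Wasserstein `CSW-s_p` is a pseudo-metric on the space of Borel probability measures on
`ℝ^{c×d×d}` (with `d = 2^(M+1)·a`, i.e. `N = M + 2 ≥ 2`) with finite `p`-th moments:
it is nonnegative, vanishes on the diagonal, is symmetric, and satisfies the triangle
inequality. -/
theorem csw_stride_pseudometric (c a M : ℕ) (hc : 1 ≤ c) (ha : 1 ≤ a)
    (p : ℝ) (hp : 1 ≤ p)
    (μ ν μ₁ μ₂ μ₃ : Measure (TensorSpace c (2 ^ (M + 1) * a)))
    [IsProbabilityMeasure μ] [IsProbabilityMeasure ν] [IsProbabilityMeasure μ₁]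
    [IsProbabilityMeasure μ₂] [IsProbabilityMeasure μ₃]
    (hμ : FiniteMomentP p μ) (hν : FiniteMomentP p ν) (h₁ : FiniteMomentP p μ₁)
    (h₂ : FiniteMomentP p μ₂) (h₃ : FiniteMomentP p μ₃) :
    0 ≤ CSWs c a M p μ ν ∧ CSWs c a M p μ μ = 0 ∧
      CSWs c a M p μ ν = CSWs c a M p ν μ ∧
      CSWs c a M p μ₁ μ₃ ≤ CSWs c a M p μ₁ μ₂ + CSWs c a M p μ₂ μ₃ := by
  have hp0 : p ≠ 0 := by linarith
  refine ⟨?_, ?_, ?_, ?_⟩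
  · exact Real.rpow_nonneg (integral_nonneg fun ω =>
      Real.rpow_nonneg (wassersteinDist_nonneg _ _ _) _) _
  · simp [CSWs, wassersteinDist_eq_toReal hp, wassersteinE_self, Real.zero_rpow, hp0]
  · simp only [CSWs]
    congr 2
    ext ω
    rw [wassersteinDist_comm hp]
  · exact integral_rpow_add_le hp (fun _ => wassersteinDist_nonneg _ _ _)
      (fun _ => wassersteinDist_nonneg _ _ _) (fun _ => wassersteinDist_nonneg _ _ _)
      (memLp_wassersteinDist_slicerOf c a M hp h₁ h₂)
      (memLp_wassersteinDist_slicerOf c a M hp h₂ h₃)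
      (memLp_wassersteinDist_slicerOf c a M hp h₁ h₃)
      fun ω => wassersteinDist_map_clm_triangle hp h₁ h₂ h₃ (slicerCLM c a M ω)
        (slicerCLM c a M ω) (slicerCLM c a M ω)

end
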